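/- arXiv:2309.08093 — 2 statements merged into one kernel-verified Lean document; each statement's English description precedes it below -/
import Mathlib

section
/- Let $S \in \mathbb{R}^{m \times n_1 n_2}$ be the TensorSketch matrix generated by CountSketch matrices $S_1 \in \mathbb{R}^{m \times n_1}$ and $S_2 \in \mathbb{R}^{m \times n_2}$. Then for any matrices $A \in \mathbb{R}^{n_1 \times r_1}$ and $B \in \mathbb{R}^{n_2 \times r_2}$, $S (B \otimes A) = F^{-1}\,[(F S_2 B) \,\square\, (F S_1 A)]$, where $F \in \mathbb{C}^{m \times m}$ is the discrete Fourier transform matrix and $B \otimes A \in \mathbb{R}^{n_1 n_2 \times r_1 r_2}$ is the Kronecker product indexed so that its row corresponding to $(i_1, i_2)$ (column index $i = i_1 + (i_2-1)n_1$) equals $B(i_2,:) \otimes A(i_1,:)$. -/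
open Matrix Complex

noncomputable def dft (m : ℕ) : Matrix (Fin m) (Fin m) ℂ :=
  Matrix.of fun s t : Fin m =>
    Complex.exp (-2 * Real.pi * Complex.I * ((s : ℕ) : ℂ) * ((t : ℕ) : ℂ) / (m : ℂ))

def countSketch {m : ℕ} {ι : Type*} (h : ι → Fin m) (v : ι → ℝ) :
    Matrix (Fin m) ι ℝ :=
  Matrix.of fun j i => if h i = j then v i else 0

def faceSplit {μ n₁ n₂ α : Type*} [Mul α] (D : Matrix μ n₂ α) (C : Matrix μ n₁ α) :
    Matrix μ (n₁ × n₂) α :=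
  Matrix.of fun s i => D s i.2 * C s i.1

def hashPair {m : ℕ} [NeZero m] {ι₁ ι₂ : Type*} (h₁ : ι₁ → Fin m) (h₂ : ι₂ → Fin m) :
    ι₁ × ι₂ → Fin m :=
  fun i => ⟨((h₁ i.1 : ℕ) + (h₂ i.2 : ℕ)) % m, Nat.mod_lt _ (Nat.pos_of_ne_zero (NeZero.ne m))⟩

def hashFam {m : ℕ} [NeZero m] {q : ℕ} {n : Fin q → ℕ} (h : ∀ k, Fin (n k) → Fin m) :
    (∀ k, Fin (n k)) → Fin m :=
  fun i => ⟨(∑ k, (h k (i k) : ℕ)) % m, Nat.mod_lt _ (Nat.pos_of_ne_zero (NeZero.ne m))⟩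

def ttChain (r n : ℕ → ℕ) {α : Type*} [Semiring α]
    (G : (j : ℕ) → Fin (n j) → Matrix (Fin (r j)) (Fin (r (j + 1))) α) :
    (p : ℕ) → ((j : Fin p) → Fin (n j)) → Matrix (Fin (r 0)) (Fin (r p)) α
  | 0, _ => 1
  | p + 1, i => ttChain r n G p (fun j => i j.castSucc) * G p (i (Fin.last p))

theorem dft_apply_pow (m : ℕ) (s t : Fin m) :
    dft m s t = (Complex.exp (2 * Real.pi * Complex.I / (m : ℂ)))⁻¹ ^ ((s : ℕ) * (t : ℕ)) := by
  rw [← Complex.exp_neg, ← Complex.exp_nat_mul]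
  simp only [dft, Matrix.of_apply]
  congr 1
  push_cast
  ring

theorem dft_det_isUnit (m : ℕ) [NeZero m] : IsUnit (dft m).det := by
  have hp := (Complex.isPrimitiveRoot_exp m (NeZero.ne m)).inv
  have : dft m = Matrix.vandermonde
      (fun s : Fin m => (Complex.exp (2 * Real.pi * Complex.I / (m : ℂ)))⁻¹ ^ (s : ℕ)) := by
    ext s t
    rw [dft_apply_pow, Matrix.vandermonde_apply, pow_mul]
  rw [this, isUnit_iff_ne_zero, Matrix.det_vandermonde_ne_zero_iff]
  intro a b hab
  exact Fin.ext (hp.pow_inj a.2 b.2 hab)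

theorem dft_mul_countSketch (m : ℕ) {ι : Type*} (h : ι → Fin m) (v : ι → ℝ) (s : Fin m) (i : ι) :
    (dft m * (countSketch h v).map Complex.ofReal) s i = dft m s (h i) * (v i : ℂ) := by
  simp [Matrix.mul_apply, countSketch, apply_ite Complex.ofReal]

theorem dft_hashPair (m : ℕ) [NeZero m] {ι₁ ι₂ : Type*} (h₁ : ι₁ → Fin m) (h₂ : ι₂ → Fin m)
    (s : Fin m) (i : ι₁ × ι₂) :
    dft m s (hashPair h₁ h₂ i) = dft m s (h₁ i.1) * dft m s (h₂ i.2) := by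
  have hp := (Complex.isPrimitiveRoot_exp m (NeZero.ne m)).inv
  rw [dft_apply_pow, dft_apply_pow, dft_apply_pow, ← pow_add, ← mul_add]
  simp only [hashPair]
  rw [mul_comm (s : ℕ), mul_comm (s : ℕ), pow_mul, pow_mul]
  congr 1
  rw [← pow_mod_orderOf _ ((h₁ i.1 : ℕ) + (h₂ i.2 : ℕ)), ← hp.eq_orderOf]

/-- Corollary 3.3: for the TensorSketch matrix `S` generated by two
CountSketch matrices and any `A ∈ ℝ^{n₁×r₁}`, `B ∈ ℝ^{n₂×r₂}`,
`S (B ⊗ A) = F⁻¹ [(F S₂ B) □ (F S₁ A)]`.  The Kronecker product `B ⊗ A` is indexed so that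
its row at `(i₁,i₂)` is `B(i₂,:) ⊗ A(i₁,:)`, i.e. its `((i₁,i₂),(j₁,j₂))` entry is
`A i₁ j₁ * B i₂ j₂`. -/
theorem tensorSketch_mul_kronecker
    {m n₁ n₂ r₁ r₂ : ℕ} [NeZero m]
    (h₁ : Fin n₁ → Fin m) (h₂ : Fin n₂ → Fin m)
    (v₁ : Fin n₁ → ℝ) (v₂ : Fin n₂ → ℝ)
    (hv₁ : ∀ i, v₁ i = 1 ∨ v₁ i = -1) (hv₂ : ∀ i, v₂ i = 1 ∨ v₂ i = -1)
    (S : Matrix (Fin m) (Fin n₁ × Fin n₂) ℝ)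
    (hS : S = countSketch (hashPair h₁ h₂) (fun i => v₁ i.1 * v₂ i.2))
    (A : Matrix (Fin n₁) (Fin r₁) ℝ) (B : Matrix (Fin n₂) (Fin r₂) ℝ) :
    (S * Matrix.kroneckerMap (· * ·) A B).map Complex.ofReal =
      (dft m)⁻¹ *
        faceSplit (dft m * (countSketch h₂ v₂).map Complex.ofReal * B.map Complex.ofReal)
                  (dft m * (countSketch h₁ v₁).map Complex.ofReal * A.map Complex.ofReal) := by
  subst hS
  have key : dft m * (countSketch (hashPair h₁ h₂) (fun i => v₁ i.1 * v₂ i.2) *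
        Matrix.kroneckerMap (· * ·) A B).map Complex.ofReal =
      faceSplit (dft m * (countSketch h₂ v₂).map Complex.ofReal * B.map Complex.ofReal)
        (dft m * (countSketch h₁ v₁).map Complex.ofReal * A.map Complex.ofReal) := by
    have hmap : (countSketch (hashPair h₁ h₂) (fun i => v₁ i.1 * v₂ i.2) *
        Matrix.kroneckerMap (· * ·) A B).map Complex.ofReal =
        (countSketch (hashPair h₁ h₂) (fun i => v₁ i.1 * v₂ i.2)).map Complex.ofReal *
        (Matrix.kroneckerMap (· * ·) A B).map Complex.ofReal :=
      Matrix.map_mul (f := Complex.ofRealHom)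
    rw [hmap, ← Matrix.mul_assoc]
    ext s j
    simp only [faceSplit, Matrix.of_apply]
    rw [Matrix.mul_apply, Matrix.mul_apply, Matrix.mul_apply, mul_comm, Finset.sum_mul_sum,
      Fintype.sum_prod_type]
    refine Finset.sum_congr rfl fun a _ => Finset.sum_congr rfl fun b _ => ?_
    simp only [dft_mul_countSketch, dft_hashPair, Matrix.map_apply, Matrix.kroneckerMap_apply]
    push_cast
    ring
  rw [← key, Matrix.nonsing_inv_mul_cancel_left _ _ (dft_det_isUnit m)]
end

section
/- Let $\mathcal{G}_{k+1} \in \mathbb{R}^{r_k \times n_{k+1} \times r_{k+1}}, \ldots, \mathcal{G}_d \in \mathbb{R}^{r_{d-1} \times n_d \times 1}$ be TT-cores and let $G_{>k} \in \mathbb{R}^{r_k \times n_{k+1}\cdots n_d}$ be the matrix whose column indexed by $(i_{k+1}, \ldots, i_d)$ equals the product $\mathcal{G}_{k+1}(i_{k+1})\cdots\mathcal{G}_d(i_d)$. Let $S_{>k} \in \mathbb{R}^{m \times n_{k+1}\cdots n_d}$ be the TensorSketch matrix generated by CountSketch matrices $S_{k+1}, \ldots, S_d$ with $S_j \in \mathbb{R}^{m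 \times n_j}$, and $F \in \mathbb{C}^{m\times m}$ the DFT matrix. Then $F S_{>k} G_{>k}^{\top} = \left[\left((\mathcal{G}_{k+1} \times_2 F S_{k+1}) \star (\mathcal{G}_{k+2} \times_2 F S_{k+2}) \star \cdots \star (\mathcal{G}_d \times_2 F S_d)\right)^{\mathrm{R}}\right]^{\top}$, where $[\cdot]^{\mathrm{R}}$ denotes the right unfolding of a third-order tensor. -/
open Matrix Complex

/-- The complex third-order tensor `𝒢_j ×₂ (F S_j)` (2-mode product of the TT-core `𝒢_j`
with the DFT-transformed CountSketch matrix `F S_j`), presented by its lateral slices: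
`(𝒢_j ×₂ F S_j)(s) = ∑ i, (F S_j)(s,i) • 𝒢_j(i)`. -/
noncomputable def modeCore {m : ℕ} (r n : ℕ → ℕ)
    (G : (j : ℕ) → Fin (n j) → Matrix (Fin (r j)) (Fin (r (j + 1))) ℝ)
    (h : (j : ℕ) → Fin (n j) → Fin m) (v : (j : ℕ) → Fin (n j) → ℝ) :
    (j : ℕ) → Fin m → Matrix (Fin (r j)) (Fin (r (j + 1))) ℂ :=
  fun j s => Matrix.of fun x y =>
    ∑ i, (dft m * (countSketch (h j) (v j)).map Complex.ofReal) s i * ((G j i x y : ℝ) : ℂ)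

theorem dft_countSketch_apply {m : ℕ} {ι : Type*} (h : ι → Fin m) (v : ι → ℝ)
    (s : Fin m) (i : ι) :
    (dft m * (countSketch h v).map Complex.ofReal) s i = dft m s (h i) * (v i : ℂ) := by
  rw [Matrix.mul_apply, Finset.sum_eq_single (h i)]
  · simp [countSketch]
  · intro t _ ht
    simp [countSketch, Ne.symm ht]
  · simp

theorem dft_eq_pow {m : ℕ} (s t : Fin m) :
    dft m s t = Complex.exp (-2 * Real.pi * Complex.I * ((s : ℕ) : ℂ) / (m : ℂ)) ^ (t : ℕ) := by
  rw [← Complex.exp_nat_mul]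
  simp only [dft, Matrix.of_apply]
  congr 1
  ring

theorem dft_root_pow {m : ℕ} [NeZero m] (s : Fin m) :
    Complex.exp (-2 * Real.pi * Complex.I * ((s : ℕ) : ℂ) / (m : ℂ)) ^ m = 1 := by
  have hm : (m : ℂ) ≠ 0 := Nat.cast_ne_zero.mpr (NeZero.ne m)
  rw [← Complex.exp_nat_mul, Complex.exp_eq_one_iff]
  refine ⟨-((s : ℕ) : ℤ), ?_⟩
  push_cast
  field_simp

theorem dft_hashFam {m : ℕ} [NeZero m] {q : ℕ} {n : Fin q → ℕ} (h : ∀ k, Fin (n k) → Fin m)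
    (s : Fin m) (i : ∀ k, Fin (n k)) :
    dft m s (hashFam h i) = ∏ k, dft m s (h k (i k)) := by
  simp only [dft_eq_pow]
  rw [Finset.prod_pow_eq_pow_sum]
  simp only [hashFam]
  exact (pow_eq_pow_mod _ (dft_root_pow s)).symm

theorem ttChain_modeCore {m : ℕ} (r n : ℕ → ℕ)
    (G : (j : ℕ) → Fin (n j) → Matrix (Fin (r j)) (Fin (r (j + 1))) ℝ)
    (h : (j : ℕ) → Fin (n j) → Fin m) (v : (j : ℕ) → Fin (n j) → ℝ) (s : Fin m) (p : ℕ) :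
    ∀ (a : Fin (r 0)) (b : Fin (r p)),
      ttChain r (fun _ => m) (modeCore r n G h v) p (fun _ => s) a b =
        ∑ i : (j : Fin p) → Fin (n j),
          (∏ j : Fin p, dft m s (h j (i j)) * (v j (i j) : ℂ)) *
            ((ttChain r n G p i a b : ℝ) : ℂ) := by
  induction p with
  | zero =>
    intro a b
    by_cases hab : a = b <;> simp [ttChain, Matrix.one_apply, hab]
  | succ p ih =>
    intro a b
    rw [← (Fin.snocEquiv (fun j : Fin (p + 1) => Fin (n j))).sum_comp, Fintype.sum_prod_type]
    simp only [ttChain, modeCore, dft_countSketch_apply]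
    simp only [Matrix.mul_apply, ih, Matrix.of_apply,
      Fin.prod_univ_castSucc, Fin.snocEquiv_apply, Fin.snoc_castSucc, Fin.snoc_last,
      Complex.ofReal_sum, Complex.ofReal_mul, Finset.mul_sum, Finset.sum_mul]
    rw [Finset.sum_comm]
    refine Finset.sum_congr rfl fun x _ => ?_
    rw [Finset.sum_comm]
    refine Finset.sum_congr rfl fun y _ => ?_
    refine Finset.sum_congr rfl fun z _ => ?_
    simp only [Fin.val_last, Fin.val_castSucc]
    ring

/-- Theorem 3.5, second identity: for TT-cores
`𝒢_{k+1} ∈ ℝ^{r_k×n_{k+1}×r_{k+1}}, …, 𝒢_d ∈ ℝ^{r_{d-1}×n_d×1}` (here relabelled as `p = d-k`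
cores with ranks `r 0 = r_k` and `r p = 1`), the matrix `G_{>k}` whose column at
`(i_{k+1},…,i_d)` is `𝒢_{k+1}(i_{k+1})⋯𝒢_d(i_d)`, and the TensorSketch matrix `S_{>k}`
generated by CountSketch matrices `S_{k+1},…,S_d`, one has
`F S_{>k} G_{>k}ᵀ = [((𝒢_{k+1} ×₂ F S_{k+1}) ⋆ ⋯ ⋆ (𝒢_d ×₂ F S_d))^R]ᵀ`; the transposed
right unfolding is expressed entrywise via the identification `Fin m × Fin (r p) ≃ Fin m`
given by `r p = 1`: its `((s,b), a)` entry is the `(a,b)` entry of the `s`-th slice of the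
slice-wise product. -/
theorem dft_tensorSketch_interfaceRight_eq_sliceChain
    {m p : ℕ} [NeZero m] (r n : ℕ → ℕ) (hrp : r p = 1)
    (G : (j : ℕ) → Fin (n j) → Matrix (Fin (r j)) (Fin (r (j + 1))) ℝ)
    (h : (j : ℕ) → Fin (n j) → Fin m) (v : (j : ℕ) → Fin (n j) → ℝ)
    (hv : ∀ j i, v j i = 1 ∨ v j i = -1)
    (Ggt : Matrix (Fin (r 0)) ((j : Fin p) → Fin (n j)) ℝ)
    (hGgt : ∀ (a : Fin (r 0)) i (b : Fin (r p)), Ggt a i = ttChain r n G p i a b)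
    (Sgt : Matrix (Fin m) ((j : Fin p) → Fin (n j)) ℝ)
    (hSgt : Sgt = countSketch (hashFam (n := fun j : Fin p => n j) (fun j => h j))
      (fun i => ∏ j : Fin p, v (↑j) (i j))) :
    ∀ (s : Fin m) (b : Fin (r p)) (a : Fin (r 0)),
      (dft m * Sgt.map Complex.ofReal * (Ggt.map Complex.ofReal)ᵀ) s a =
        ttChain r (fun _ => m) (modeCore r n G h v) p (fun _ => s) a b := by
  intro s b a
  rw [ttChain_modeCore, Matrix.mul_apply]
  refine Finset.sum_congr rfl fun i _ => ?_
  rw [hSgt, dft_countSketch_apply, dft_hashFam, Finset.prod_mul_distrib, Matrix.transpose_apply,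
    Matrix.map_apply, hGgt a i b, Complex.ofReal_prod]
end
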